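/- Let H : [0,∞) → [0,∞) be nonincreasing and G : [0,∞)×[0,∞) → [0,∞) be supermodular. (i) For all finitely supported u, v : ℤ → [0,∞): Σ_{x,y∈ℤ} G(u(x), v(y)) H(|x−y|) ≤ Σ_{x,y∈ℤ} G(R_ℤ u(x), R_ℤ v(y)) H(|x−y|). (ii) The same inequality holds for finitely supported u, v on the half-integers ℤ+1/2, with R_{ℤ+1/2} in place of R_ℤ. (iii) For finitely supported u : ℤ → [0,∞) and v : ℤ+1/2 → [0,∞): Σ_{x∈ℤ, y∈ℤ+1/2} G(u(x), v(y)) H(|x−y|) ≤ Σ_{x∈ℤ, y∈ℤ+1/2} G(R_ℤ u(x), R_{ℤ+1/2} v(y)) H(|x−y|). (All sums are taken in [0,∞].) -/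

import Mathlib

open Filter Topology

noncomputable section

abbrev ZLat (d : ℕ) := Fin d → ℤ

def stdVec (d : ℕ) (i : Fin d) : Fin d → ℝ := fun j => if j = i then 1 else 0

/-- The set of directions E⃗ ⊆ ℝ^d. -/
def Evec (d : ℕ) : Set (Fin d → ℝ) :=
  {e | (∃ i, e = stdVec d i) ∨
    (∃ i j : Fin d, i < j ∧ e = fun k => (stdVec d i k + stdVec d j k) / 2) ∨
    (∃ i j : Fin d, i < j ∧ e = fun k => (stdVec d i k - stdVec d j k) / 2)}

/-- A fixed enumeration of E⃗ (for d = 2 it is e₁, e₂, (e₁+e₂)/2, (e₁-e₂)/2). -/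
def EvecList (d : ℕ) : List (Fin d → ℝ) :=
  ((List.finRange d).map (stdVec d)) ++
  ((List.finRange d).flatMap fun i => (List.finRange d).filterMap fun j =>
    if i < j then some (fun k => (stdVec d i k + stdVec d j k) / 2) else none) ++
  ((List.finRange d).flatMap fun i => (List.finRange d).filterMap fun j =>
    if i < j then some (fun k => (stdVec d i k - stdVec d j k) / 2) else none)

/-- The n-th largest value of `u`, counted with multiplicity (1-indexed). -/
def nthLargest {α : Type*} (u : α → NNReal) (n : ℕ) : NNReal :=
  sSup {t | ∃ Ω : Finset α, Ω.card = n ∧ ∀ x ∈ Ω, t ≤ u x}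

/-- The 1-indexed position of the point with doubled coordinate `m` in the
spiral order 0, 1, −1, 2, −2, … (for even m) resp. 1/2, −1/2, 3/2, −3/2, … (for odd m). -/
def posIdx (m : ℤ) : ℕ := (if 0 < m then m else 1 - m).toNat

/-- `x` and `y` lie on a common line with direction `e`. -/
def sameLine {d : ℕ} (e : Fin d → ℝ) (x y : ZLat d) : Prop :=
  ∃ c : ℝ, (fun i => (x i : ℝ) - (y i : ℝ)) = c • e

/-- Twice the inner product ⟨e, x⟩, as an integer. -/
def pairing {d : ℕ} (e : Fin d → ℝ) (x : ZLat d) : ℤ :=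
  ⌊2 * ∑ i, e i * (x i : ℝ)⌋

/-- One-step rearrangement `R_e`. -/
def stepR {d : ℕ} (e : Fin d → ℝ) (u : ZLat d → NNReal) : ZLat d → NNReal :=
  fun x => nthLargest (fun y : {y : ZLat d // sameLine e x y} => u y.1) (posIdx (pairing e x))

/-- `R^k u` : k successive one-step rearrangements cycling through the fixed enumeration. -/
def iterR (d : ℕ) (u : ZLat d → NNReal) : ℕ → ZLat d → NNReal
  | 0 => u
  | k + 1 => stepR ((EvecList d).getD (k % (EvecList d).length) 0) (iterR d u k)

/-- The Schwarz rearrangement on ℤ^d : pointwise limit of `R^k u`. -/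
def RZd (d : ℕ) (u : ZLat d → NNReal) : ZLat d → NNReal :=
  fun x => limUnder atTop fun k => iterR d u k x

def Admissible {α : Type*} (u : α → NNReal) : Prop :=
  ∀ t : NNReal, 0 < t → {x | t < u x}.Finite

def Equimeasurable {α : Type*} (u v : α → NNReal) : Prop :=
  ∀ t : NNReal, 0 < t → Nonempty ({x | t < u x} ≃ {x | t < v x})

/-- Graph distance (ℓ¹ distance) on the lattice ℤ^d. -/
def latDist {d : ℕ} (x y : ZLat d) : ℕ := ∑ i, (x i - y i).natAbs

/-- The i-th standard basis vector of ℤ^d. -/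
def latE {d : ℕ} (i : Fin d) : ZLat d := fun j => if j = i then 1 else 0

/-- ‖∇u‖_p^p : the p-Sobolev energy, summing over each edge {x, x+e_i} once. -/
def gradEnergy (d : ℕ) (p : ℝ) (u : ZLat d → NNReal) : ENNReal :=
  ∑' (x : ZLat d) (i : Fin d), ENNReal.ofReal (|(u (x + latE i) : ℝ) - (u x : ℝ)| ^ p)

/-- ‖∇u‖_p. -/
def gradNorm (d : ℕ) (p : ℝ) (u : ZLat d → NNReal) : ENNReal :=
  gradEnergy d p u ^ (1 / p)

/-- Graph automorphism of the lattice graph ℤ^d. -/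
def IsLatAuto {d : ℕ} (σ : ZLat d ≃ ZLat d) : Prop :=
  ∀ x y : ZLat d, latDist (σ x) (σ y) = 1 ↔ latDist x y = 1

def Supermodular (G : NNReal → NNReal → NNReal) : Prop :=
  ∀ s t s₀ t₀ : NNReal, G (s + s₀) t + G s (t + t₀) ≤ G (s + s₀) (t + t₀) + G s t

def StrictlySupermodular (G : NNReal → NNReal → NNReal) : Prop :=
  ∀ s t s₀ t₀ : NNReal, 0 < s₀ → 0 < t₀ →
    G (s + s₀) t + G s (t + t₀) < G (s + s₀) (t + t₀) + G s t

/-- The values of `u` are strictly decreasing: a₁ > a₂ > a₃ > ⋯ . -/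
def StrictRan {α : Type*} (u : α → NNReal) : Prop :=
  ∀ n : ℕ, 0 < n → nthLargest u (n + 1) < nthLargest u n


/-- The one-dimensional Schwarz rearrangement on ℤ. -/
def RZ1 (u : ℤ → NNReal) : ℤ → NNReal := fun x => nthLargest u (posIdx (2 * x))

/-- The one-dimensional Schwarz rearrangement on ℤ+1/2, where the index k : ℤ
represents the half-integer point k + 1/2. -/
def RHalf (u : ℤ → NNReal) : ℤ → NNReal := fun k => nthLargest u (posIdx (2 * k + 1))

/-!
If `G(0, 0) ≠ 0` the right-hand side is infinite unless the kernel vanishes. Otherwise the axis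
terms `G(s, 0)` and `G(0, t)` contribute equally to both sides, because rearranging only permutes
values, and subtracting them from `G` leaves a supermodular function vanishing on the axes. For
such a function, list the values of `u` and `v` in decreasing order along bijections `ℕ ≃ ℤ`. Two
summations by parts against the nonnegative mixed differences of `G` reduce the claim to initial
segments of these listings, that is, to indicator functions of finite sets `A` and `B`. There,
remove the largest elements `a` of `A` and `b` of `B`: the lost pairs have pairwise distinct
differences `x - b` and `a - y`. There are `#A + #B - 1` of these, so the kernel sums to at most
as much over them as over a centred interval of that length, which is what is lost when `A` and
`B` are centred intervals.
-/

section SetRiesz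

open Finset

theorem sum_le_sum_of_card_eq {ι M : Type*} [DecidableEq ι] [AddCommMonoid M] [PartialOrder M]
    [IsOrderedAddMonoid M] {f : ι → M} {s t : Finset ι} (hcard : #s = #t)
    (h : ∀ i ∈ s \ t, ∀ j ∈ t \ s, f i ≤ f j) : ∑ i ∈ s, f i ≤ ∑ i ∈ t, f i := by
  have e : ↥(s \ t) ≃ ↥(t \ s) := equivOfCardEq (card_sdiff_comm hcard)
  have hdiff : ∑ i ∈ s \ t, f i ≤ ∑ i ∈ t \ s, f i := by
    rw [← sum_coe_sort (s \ t), ← sum_coe_sort (t \ s), ← e.sum_comp]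
    exact sum_le_sum fun i _ => h i i.2 (e i) (e i).2
  rw [← sum_inter_add_sum_sdiff s t, ← sum_inter_add_sum_sdiff t s, inter_comm t s]
  gcongr

variable {M : Type*}

/-- The kernel `k` on `ℤ` is symmetric decreasing about `-c / 2`: it is a nonincreasing function of
the distance to that point. For `x ∈ ℤ + c₁/2` and `y ∈ ℤ + c₂/2` with integer indices `m` and `n`,
a nonincreasing function of `|x - y|` is such a kernel in `m - n`, with `c = c₁ - c₂`. -/
def SymmDecreasing [LE M] (c : ℤ) (k : ℤ → M) : Prop :=
  ∀ ⦃x y : ℤ⦄, |2 * x + c| ≤ |2 * y + c| → k y ≤ k x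

theorem SymmDecreasing.of_antitone_nnabs [Preorder M] {H : NNReal → M} (hH : Antitone H) (c : ℤ) :
    SymmDecreasing c fun z => H (Real.nnabs (z + c / 2)) := by
  intro x y hxy
  apply hH
  rw [← NNReal.coe_le_coe, Real.coe_nnabs, Real.coe_nnabs]
  have hdouble (z : ℤ) : |(z : ℝ) + c / 2| = ((|2 * z + c| : ℤ) : ℝ) / 2 := by
    have : (z : ℝ) + c / 2 = ((2 * z + c : ℤ) : ℝ) / 2 := by
      push_cast
      ring
    rw [this, abs_div, abs_two, Int.cast_abs]
  rw [hdouble, hdouble]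
  gcongr

/-- The differences `x - y` of the pairs `(x, y)` in `insert a A ×ˢ insert b B` outside `A ×ˢ B`,
when `a` and `b` lie above `A` and `B`. -/
def cornerDiffs (a b : ℤ) (A B : Finset ℤ) : Finset ℤ :=
  (insert a A).image (· - b) ∪ B.image (a - ·)

theorem disjoint_cornerDiffs {a b : ℤ} {A B : Finset ℤ} (hA : ∀ x ∈ A, x < a)
    (hB : ∀ y ∈ B, y < b) : Disjoint ((insert a A).image (· - b)) (B.image (a - ·)) := by
  rw [disjoint_left]
  simp only [mem_image, mem_insert]
  grind

theorem card_cornerDiffs {a b : ℤ} {A B : Finset ℤ} (hA : ∀ x ∈ A, x < a) (hB : ∀ y ∈ B, y < b) :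
    #(cornerDiffs a b A B) = #A + #B + 1 := by
  have ha : a ∉ A := fun h => (hA a h).false
  rw [cornerDiffs, card_union_of_disjoint (disjoint_cornerDiffs hA hB),
    card_image_of_injective _ (sub_left_injective (b := b)),
    card_image_of_injective _ (sub_right_injective (b := a)), card_insert_of_notMem ha]
  ring

theorem sum_sum_insert_sub [AddCommMonoid M] (k : ℤ → M) {a b : ℤ} {A B : Finset ℤ}
    (hA : ∀ x ∈ A, x < a) (hB : ∀ y ∈ B, y < b) :
    ∑ x ∈ insert a A, ∑ y ∈ insert b B, k (x - y) =
      ∑ x ∈ A, ∑ y ∈ B, k (x - y) + ∑ z ∈ cornerDiffs a b A B, k z := by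
  have ha : a ∉ A := fun h => (hA a h).false
  have hb : b ∉ B := fun h => (hB b h).false
  rw [cornerDiffs, sum_union (disjoint_cornerDiffs hA hB), sum_image sub_left_injective.injOn,
    sum_image sub_right_injective.injOn]
  simp only [sum_insert ha, sum_insert hb, sum_add_distrib]
  abel

theorem cornerDiffs_Ico (p q : ℤ) (m n : ℕ) :
    cornerDiffs (p + m) (q + n) (Ico p (p + m)) (Ico q (q + n)) =
      Ico (p - q - n) (p - q - n + (m + n + 1 : ℕ)) := by
  ext z
  simp only [cornerDiffs, mem_union, mem_image, mem_insert, mem_Ico]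
  constructor
  · rintro (⟨x, hx, rfl⟩ | ⟨y, hy, rfl⟩) <;> omega
  · intro hz
    rcases le_or_gt z (p + m - q - n) with h | h
    · exact Or.inl ⟨z + q + n, by omega, by omega⟩
    · exact Or.inr ⟨p + m - z, by omega, by omega⟩

theorem sum_sum_Ico_succ_sub [AddCommMonoid M] (k : ℤ → M) (p q : ℤ) (m n : ℕ) :
    ∑ x ∈ Ico p (p + (m + 1 : ℕ)), ∑ y ∈ Ico q (q + (n + 1 : ℕ)), k (x - y) =
      ∑ x ∈ Ico p (p + m), ∑ y ∈ Ico q (q + n), k (x - y) +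
        ∑ z ∈ Ico (p - q - n) (p - q - n + (m + n + 1 : ℕ)), k z := by
  have Ico_succ (r : ℤ) (l : ℕ) : Ico r (r + (l + 1 : ℕ)) = insert (r + l) (Ico r (r + l)) := by
    rw [insert_Ico_right_eq_Ico_add_one (by simp), Nat.cast_succ, add_assoc]
  rw [Ico_succ, Ico_succ, sum_sum_insert_sub k (by simp) (by simp), cornerDiffs_Ico]

variable [AddCommMonoid M] [PartialOrder M] [IsOrderedAddMonoid M] {c : ℤ} {k : ℤ → M}

theorem SymmDecreasing.sum_le_sum_Ico (hk : SymmDecreasing c k) (D : Finset ℤ) {p : ℤ}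
    (hp : |2 * p + #D - 1 + c| ≤ 1) : ∑ z ∈ D, k z ≤ ∑ z ∈ Ico p (p + #D), k z := by
  refine sum_le_sum_of_card_eq (by simp) ?_
  intro i hi j hj
  apply hk
  simp only [Finset.mem_sdiff, Finset.mem_Ico] at hi hj
  grind

theorem SymmDecreasing.sum_sum_le_sum_sum_Ico (hk : SymmDecreasing c k) (A B : Finset ℤ) {p q : ℤ}
    (hpq : |(2 * p + #A) - (2 * q + #B) + c| ≤ 1) :
    ∑ x ∈ A, ∑ y ∈ B, k (x - y) ≤
      ∑ x ∈ Ico p (p + #A), ∑ y ∈ Ico q (q + #B), k (x - y) := by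
  induction A using Finset.induction_on_max generalizing B with
  | empty => simp
  | insert a A hA ih =>
    cases B using Finset.induction_on_max with
    | empty => simp
    | insert b B hB =>
      rw [card_insert_of_notMem fun h => (hA a h).false,
        card_insert_of_notMem fun h => (hB b h).false] at hpq ⊢
      rw [sum_sum_insert_sub k hA hB, sum_sum_Ico_succ_sub, ← card_cornerDiffs hA hB]
      refine add_le_add (ih B ?_) (hk.sum_le_sum_Ico _ ?_)
      · convert hpq using 2
        push_cast
        ring
      · rw [card_cornerDiffs hA hB]
        convert hpq using 2
        push_cast
        ring

end SetRiesz

section SummationByParts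

open Finset

theorem sum_range_mul_eq_sum_sub_mul {R : Type*} [Ring R] {N : ℕ} (f g : ℕ → R)
    (hN : f N = 0) :
    ∑ i ∈ range N, f i * g i = ∑ m ∈ range N, (f m - f (m + 1)) * ∑ i ∈ range (m + 1), g i := by
  have h := sum_range_by_parts f g (N + 1)
  simp only [sum_range_succ _ N, hN, add_tsub_cancel_right, smul_eq_mul, zero_mul, add_zero,
    zero_sub] at h
  rw [h, ← sum_neg_distrib]
  exact sum_congr rfl fun m _ => by rw [← neg_mul, neg_sub]

variable {R : Type*} [Ring R] [PartialOrder R] [IsOrderedRing R] {N : ℕ}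

theorem sum_range_mul_le_of_antitone {f g g' : ℕ → R} (hf : Antitone f) (hN : f N = 0)
    (hg : ∀ n, ∑ i ∈ range n, g i ≤ ∑ i ∈ range n, g' i) :
    ∑ i ∈ range N, f i * g i ≤ ∑ i ∈ range N, f i * g' i := by
  rw [sum_range_mul_eq_sum_sub_mul f g hN, sum_range_mul_eq_sum_sub_mul f g' hN]
  exact sum_le_sum fun m _ =>
    mul_le_mul_of_nonneg_left (hg _) (sub_nonneg.2 (hf m.le_succ))

theorem sum_range_sum_range_mul_le_of_supermodular {M K K' : ℕ → ℕ → R}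
    (hM₁ : ∀ j, M N j = 0) (hM₂ : ∀ i, M i N = 0)
    (hM : ∀ i j, M i (j + 1) + M (i + 1) j ≤ M i j + M (i + 1) (j + 1))
    (hK : ∀ m n, ∑ i ∈ range m, ∑ j ∈ range n, K i j ≤ ∑ i ∈ range m, ∑ j ∈ range n, K' i j) :
    ∑ i ∈ range N, ∑ j ∈ range N, M i j * K i j ≤
      ∑ i ∈ range N, ∑ j ∈ range N, M i j * K' i j := by
  have by_parts (L : ℕ → ℕ → R) : ∑ i ∈ range N, ∑ j ∈ range N, M i j * L i j =
      ∑ m ∈ range N, ∑ j ∈ range N, (M m j - M (m + 1) j) * ∑ i ∈ range (m + 1), L i j := by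
    rw [sum_comm, sum_comm (s := range N) (t := range N)
      (f := fun m j => (M m j - M (m + 1) j) * ∑ i ∈ range (m + 1), L i j)]
    exact sum_congr rfl fun j _ => sum_range_mul_eq_sum_sub_mul (M · j) (L · j) (hM₁ j)
  rw [by_parts, by_parts]
  refine sum_le_sum fun m _ => sum_range_mul_le_of_antitone ?_ (by simp [hM₂]) fun n => ?_
  · refine antitone_nat_of_succ_le fun j => ?_
    rw [sub_le_sub_iff]
    exact hM m j
  · rw [sum_comm, sum_comm (s := range n)]
    exact hK (m + 1) n

theorem tsum_tsum_mul_le_of_supermodular {M K K' : ℕ → ℕ → NNReal}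
    (hM₁ : ∀ i, N ≤ i → ∀ j, M i j = 0) (hM₂ : ∀ j, N ≤ j → ∀ i, M i j = 0)
    (hM : ∀ i j, M i (j + 1) + M (i + 1) j ≤ M i j + M (i + 1) (j + 1))
    (hK : ∀ m n, ∑ i ∈ range m, ∑ j ∈ range n, K i j ≤
      ∑ i ∈ range m, ∑ j ∈ range n, K' i j) :
    ∑' (i : ℕ) (j : ℕ), ((M i j * K i j : NNReal) : ENNReal) ≤
      ∑' (i : ℕ) (j : ℕ), ((M i j * K' i j : NNReal) : ENNReal) := by
  have tsum_eq (L : ℕ → ℕ → NNReal) : ∑' (i : ℕ) (j : ℕ), ((M i j * L i j : NNReal) : ENNReal) =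
      ((∑ i ∈ range N, ∑ j ∈ range N, M i j * L i j : NNReal) : ENNReal) := by
    simp only [ENNReal.ofNNReal_finsetSum]
    rw [tsum_eq_sum (s := range N) fun i hi => by simp [hM₁ i (by simpa using hi)]]
    exact sum_congr rfl fun i _ =>
      tsum_eq_sum fun j hj => by simp [hM₂ j (by simpa using hj)]
  rw [tsum_eq, tsum_eq, ENNReal.coe_le_coe, ← NNReal.coe_le_coe]
  push_cast
  exact sum_range_sum_range_mul_le_of_supermodular (fun j => by simp [hM₁ N le_rfl])
    (fun i => by simp [hM₂ N le_rfl]) (fun i j => mod_cast hM i j) fun m n => mod_cast hK m n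

end SummationByParts

section Supermodular

variable {G : NNReal → NNReal → NNReal}

theorem Supermodular.add_le_add_of_le (hG : Supermodular G) {s s' t t' : NNReal} (hs : s' ≤ s)
    (ht : t' ≤ t) : G s t' + G s' t ≤ G s t + G s' t' := by
  simpa only [add_tsub_cancel_of_le hs, add_tsub_cancel_of_le ht] using
    hG s' t' (s - s') (t - t')

theorem Supermodular.exists_eq_add_axes (hG : Supermodular G) (h0 : G 0 0 = 0) :
    ∃ F : NNReal → NNReal → NNReal, Supermodular F ∧ (∀ s, F s 0 = 0) ∧ (∀ t, F 0 t = 0) ∧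
      ∀ s t, G s t = F s t + (G s 0 + G 0 t) := by
  have axes_le (s t : NNReal) : G s 0 + G 0 t ≤ G s t := by simpa [h0] using hG 0 0 s t
  have decomp (s t : NNReal) : G s t = G s t - (G s 0 + G 0 t) + (G s 0 + G 0 t) :=
    (tsub_add_cancel_of_le (axes_le s t)).symm
  refine ⟨fun s t => G s t - (G s 0 + G 0 t), fun s t s₀ t₀ => ?_, by simp [h0], by simp [h0],
    decomp⟩
  have h := hG s t s₀ t₀
  rw [decomp (s + s₀) t, decomp s (t + t₀), decomp (s + s₀) (t + t₀), decomp s t] at h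
  rw [← NNReal.coe_le_coe] at h ⊢
  push_cast at h ⊢
  linarith

end Supermodular

section Rearrangement

open Finset

/-- The Schwarz rearrangement on `ℤ + c/2`, where the index `x : ℤ` represents the point `x + c/2`.
It is `R_ℤ` for `c = 0` and `R_{ℤ+1/2}` for `c = 1`. -/
def rearrange (c : ℤ) (u : ℤ → NNReal) : ℤ → NNReal :=
  fun x => nthLargest u (posIdx (2 * x + c))

theorem rearrange_zero (u : ℤ → NNReal) : rearrange 0 u = RZ1 u := by
  funext x
  rw [rearrange, RZ1, add_zero]

theorem rearrange_one (u : ℤ → NNReal) : rearrange 1 u = RHalf u := rfl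

/-- The enumeration of the indices `x : ℤ` in the spiral order of the points `x + c/2` that
underlies `rearrange`. The `i`-th point has doubled coordinate `i + 1` or `-i`, whichever has the
parity of `c`. -/
def spiral (c : ℤ) : ℕ ≃ ℤ where
  toFun i := if 2 ∣ i + 1 - c then (i + 1 - c) / 2 else (-i - c) / 2
  invFun x := posIdx (2 * x + c) - 1
  left_inv i := by simp only [posIdx]; split_ifs <;> omega
  right_inv x := by simp only [posIdx]; split_ifs <;> omega

theorem posIdx_spiral (c : ℤ) (i : ℕ) : posIdx (2 * spiral c i + c) = i + 1 := by
  simp only [posIdx, spiral, Equiv.coe_fn_mk]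
  split_ifs <;> omega

theorem map_spiral_range (c : ℤ) (m : ℕ) :
    (range m).map (spiral c).toEmbedding = Ico ((2 - m - c) / 2) ((2 - m - c) / 2 + m) := by
  ext x
  simp only [mem_map_equiv, mem_range, mem_Ico, spiral, Equiv.coe_fn_symm_mk, posIdx]
  split_ifs <;> omega

theorem SymmDecreasing.sum_range_le_sum_spiral {M : Type*} [AddCommMonoid M] [PartialOrder M]
    [IsOrderedAddMonoid M] {c₁ c₂ : ℤ} {k : ℤ → M} (hk : SymmDecreasing (c₁ - c₂) k)
    (e f : ℕ ↪ ℤ) (m n : ℕ) :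
    ∑ i ∈ range m, ∑ j ∈ range n, k (e i - f j) ≤
      ∑ i ∈ range m, ∑ j ∈ range n, k (spiral c₁ i - spiral c₂ j) := by
  have h := hk.sum_sum_le_sum_sum_Ico ((range m).map e) ((range n).map f)
    (p := (2 - m - c₁) / 2) (q := (2 - n - c₂) / 2)
    (by rw [card_map, card_map, card_range, card_range, abs_le]; omega)
  simpa only [card_map, card_range, ← map_spiral_range, sum_map, Equiv.coe_toEmbedding] using h

theorem exists_perm_antitone_comp {β : Type*} [LinearOrder β] [AddZeroClass β]
    [CanonicallyOrderedAdd β] {f : ℕ → β} {N : ℕ} (hf : ∀ i, N ≤ i → f i = 0) :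
    ∃ π : Equiv.Perm ℕ, Antitone (f ∘ π) := by
  let sort : Equiv.Perm (Fin N) := Tuple.sort fun i => OrderDual.toDual (f i)
  refine ⟨sort.extendDomain Fin.equivSubtype, fun i j hij => ?_⟩
  by_cases hj : j < N
  · have hi : i < N := hij.trans_lt hj
    rw [Function.comp_apply, Function.comp_apply,
      Equiv.Perm.extendDomain_apply_subtype (b := i) _ _ hi,
      Equiv.Perm.extendDomain_apply_subtype (b := j) _ _ hj]
    exact Tuple.monotone_sort (fun i : Fin N => OrderDual.toDual (f i))
      (show (⟨i, hi⟩ : Fin N) ≤ ⟨j, hj⟩ from hij)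
  · rw [Function.comp_apply, Equiv.Perm.extendDomain_apply_not_subtype (b := j) _ _ hj,
      hf j (not_lt.1 hj)]
    exact zero_le

theorem exists_antitone_enumeration {α β : Type*} [Denumerable α] [LinearOrder β] [AddZeroClass β]
    [CanonicallyOrderedAdd β] {u : α → β} (hu : u.support.Finite) :
    ∃ e : ℕ ≃ α, Antitone (u ∘ e) ∧ ∀ᶠ i in atTop, u (e i) = 0 := by
  have eventually_zero (e : ℕ ≃ α) : ∀ᶠ i in atTop, u (e i) = 0 := by
    rw [← Nat.cofinite_eq_atTop]
    exact hu.preimage e.injective.injOn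
  obtain ⟨N, hN⟩ := eventually_atTop.1 (eventually_zero (Denumerable.eqv α).symm)
  obtain ⟨π, hπ⟩ := exists_perm_antitone_comp hN
  exact ⟨π.trans (Denumerable.eqv α).symm, hπ, eventually_zero _⟩

theorem nthLargest_succ_of_antitone {α : Type*} {u : α → NNReal} {e : ℕ ≃ α}
    (he : Antitone (u ∘ e)) (i : ℕ) : nthLargest u (i + 1) = u (e i) := by
  classical
  refine IsGreatest.csSup_eq ⟨⟨(range (i + 1)).map e.toEmbedding, by simp, ?_⟩, ?_⟩
  · intro x hx
    obtain ⟨j, hj, rfl⟩ := mem_map.1 hx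
    exact he (Nat.lt_succ_iff.1 (mem_range.1 hj))
  · rintro t ⟨Ω, hΩ, ht⟩
    obtain ⟨x, hx, hxi⟩ : ∃ x ∈ Ω, x ∉ (range i).map e.toEmbedding :=
      exists_mem_notMem_of_card_lt_card (by simp [hΩ])
    rw [mem_map_equiv, mem_range, not_lt] at hxi
    calc t ≤ u x := ht x hx
      _ = u (e (e.symm x)) := by rw [e.apply_symm_apply]
      _ ≤ u (e i) := he hxi

theorem rearrange_spiral {u : ℤ → NNReal} {e : ℕ ≃ ℤ} (he : Antitone (u ∘ e)) (c : ℤ) (i : ℕ) :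
    rearrange c u (spiral c i) = u (e i) := by
  rw [rearrange, posIdx_spiral, nthLargest_succ_of_antitone he]

theorem exists_perm_rearrange_eq (c : ℤ) {u : ℤ → NNReal} (hu : u.support.Finite) :
    ∃ π : Equiv.Perm ℤ, rearrange c u = u ∘ π := by
  obtain ⟨e, he, -⟩ := exists_antitone_enumeration hu
  refine ⟨(spiral c).symm.trans e, funext fun x => ?_⟩
  simpa using rearrange_spiral he c ((spiral c).symm x)

end Rearrangement

section RieszSum

/-- The Riesz functional `∑ G(u(x), v(y)) k(x - y)` with values in `[0, ∞]`. -/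
def rieszSum (G : NNReal → NNReal → NNReal) (k u v : ℤ → NNReal) : ENNReal :=
  ∑' (x : ℤ) (y : ℤ), ((G (u x) (v y) * k (x - y) : NNReal) : ENNReal)

variable {G : NNReal → NNReal → NNReal} {k u v : ℤ → NNReal}

theorem rieszSum_add (G₁ G₂ : NNReal → NNReal → NNReal) (k u v : ℤ → NNReal) :
    rieszSum (fun s t => G₁ s t + G₂ s t) k u v = rieszSum G₁ k u v + rieszSum G₂ k u v := by
  simp only [rieszSum, add_mul, ENNReal.coe_add, ENNReal.tsum_add]

theorem rieszSum_left (g : NNReal → NNReal) (k u v : ℤ → NNReal) :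
    rieszSum (fun s _ => g s) k u v = (∑' x, (g (u x) : ENNReal)) * ∑' z, (k z : ENNReal) := by
  rw [rieszSum, ← ENNReal.tsum_mul_right]
  refine tsum_congr fun x => ?_
  simp only [← (Equiv.subLeft x).tsum_eq fun z => (k z : ENNReal), ← ENNReal.tsum_mul_left,
    Equiv.subLeft_apply, ENNReal.coe_mul]

theorem rieszSum_right (g : NNReal → NNReal) (k u v : ℤ → NNReal) :
    rieszSum (fun _ t => g t) k u v = (∑' y, (g (v y) : ENNReal)) * ∑' z, (k z : ENNReal) := by
  rw [rieszSum, ENNReal.tsum_comm, ← ENNReal.tsum_mul_right]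
  refine tsum_congr fun y => ?_
  simp only [← (Equiv.subRight y).tsum_eq fun z => (k z : ENNReal), ← ENNReal.tsum_mul_left,
    Equiv.subRight_apply, ENNReal.coe_mul]

theorem rieszSum_eq_tsum_nat (G : NNReal → NNReal → NNReal) (k u v : ℤ → NNReal) (e f : ℕ ≃ ℤ) :
    rieszSum G k u v =
      ∑' (i : ℕ) (j : ℕ), ((G (u (e i)) (v (f j)) * k (e i - f j) : NNReal) : ENNReal) := by
  rw [rieszSum, ← e.tsum_eq]
  exact tsum_congr fun i => (f.tsum_eq _).symm

theorem rieszSum_eq_top (hu : u.support.Finite) (hv : v.support.Finite) (hG : G 0 0 ≠ 0) {z : ℤ}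
    (hz : k z ≠ 0) : rieszSum G k u v = ⊤ := by
  have hinf : (u.support ∪ (· - z) ⁻¹' v.support)ᶜ.Infinite :=
    (hu.union (hv.preimage sub_left_injective.injOn)).infinite_compl
  have := hinf.to_subtype
  rw [eq_top_iff]
  calc (⊤ : ENNReal)
      = ∑' _ : ↥(u.support ∪ (· - z) ⁻¹' v.support)ᶜ, ((G 0 0 * k z : NNReal) : ENNReal) :=
        (ENNReal.tsum_const_eq_top_of_ne_zero (by simp [hG, hz])).symm
    _ ≤ ∑' x : ↥(u.support ∪ (· - z) ⁻¹' v.support)ᶜ,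
          ∑' y, ((G (u x) (v y) * k (x - y) : NNReal) : ENNReal) := by
        refine ENNReal.tsum_le_tsum fun ⟨x, hx⟩ => le_trans ?_ (ENNReal.le_tsum (x - z))
        have hux : u x = 0 := by by_contra h; exact hx (Or.inl h)
        have hvx : v (x - z) = 0 := by by_contra h; exact hx (Or.inr h)
        rw [hux, hvx, sub_sub_cancel]
    _ ≤ rieszSum G k u v := ENNReal.tsum_comp_le_tsum_of_injective Subtype.val_injective _

variable {c₁ c₂ : ℤ}

theorem rieszSum_le_rearrange_of_axes_eq_zero (hk : SymmDecreasing (c₁ - c₂) k)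
    (hG : Supermodular G) (hG₁ : ∀ s, G s 0 = 0) (hG₂ : ∀ t, G 0 t = 0)
    (hu : u.support.Finite) (hv : v.support.Finite) :
    rieszSum G k u v ≤ rieszSum G k (rearrange c₁ u) (rearrange c₂ v) := by
  obtain ⟨e, he, hue⟩ := exists_antitone_enumeration hu
  obtain ⟨f, hf, hvf⟩ := exists_antitone_enumeration hv
  obtain ⟨N, hN⟩ := eventually_atTop.1 (hue.and hvf)
  rw [rieszSum_eq_tsum_nat G k u v e f, rieszSum_eq_tsum_nat G k _ _ (spiral c₁) (spiral c₂)]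
  simp only [rearrange_spiral he, rearrange_spiral hf]
  exact tsum_tsum_mul_le_of_supermodular (fun i hi j => by rw [(hN i hi).1, hG₂])
    (fun j hj i => by rw [(hN j hj).2, hG₁])
    (fun i j => hG.add_le_add_of_le (he i.le_succ) (hf j.le_succ))
    (hk.sum_range_le_sum_spiral e.toEmbedding f.toEmbedding)

theorem rieszSum_le_rearrange (hk : SymmDecreasing (c₁ - c₂) k) (hG : Supermodular G)
    (hu : u.support.Finite) (hv : v.support.Finite) :
    rieszSum G k u v ≤ rieszSum G k (rearrange c₁ u) (rearrange c₂ v) := by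
  obtain ⟨π, hπ⟩ := exists_perm_rearrange_eq c₁ hu
  obtain ⟨ρ, hρ⟩ := exists_perm_rearrange_eq c₂ hv
  rcases eq_or_ne (G 0 0) 0 with h0 | h0
  · obtain ⟨F, hF, hF₁, hF₂, hGF⟩ := hG.exists_eq_add_axes h0
    have split (u v : ℤ → NNReal) : rieszSum G k u v = rieszSum F k u v +
        ((∑' x, (G (u x) 0 : ENNReal)) * ∑' z, (k z : ENNReal) +
          (∑' y, (G 0 (v y) : ENNReal)) * ∑' z, (k z : ENNReal)) := by
      rw [← rieszSum_left (G · 0) k u v, ← rieszSum_right (G 0 ·) k u v, ← rieszSum_add,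
        ← rieszSum_add]
      simp only [← hGF]
    have hleft : ∑' x, (G (rearrange c₁ u x) 0 : ENNReal) = ∑' x, (G (u x) 0 : ENNReal) := by
      rw [hπ]
      exact π.tsum_eq fun x => (G (u x) 0 : ENNReal)
    have hright : ∑' y, (G 0 (rearrange c₂ v y) : ENNReal) = ∑' y, (G 0 (v y) : ENNReal) := by
      rw [hρ]
      exact ρ.tsum_eq fun y => (G 0 (v y) : ENNReal)
    rw [split u v, split (rearrange c₁ u), hleft, hright]
    gcongr
    exact rieszSum_le_rearrange_of_axes_eq_zero hk hF hF₁ hF₂ hu hv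
  · by_cases hk0 : ∃ z, k z ≠ 0
    · obtain ⟨z, hz⟩ := hk0
      have hRu : (rearrange c₁ u).support.Finite := hπ ▸ hu.preimage π.injective.injOn
      have hRv : (rearrange c₂ v).support.Finite := hρ ▸ hv.preimage ρ.injective.injOn
      exact le_top.trans_eq (rieszSum_eq_top hRu hRv h0 hz).symm
    · push Not at hk0
      simp [rieszSum, hk0]

theorem tsum_tsum_le_rearrange {H : NNReal → NNReal} (hH : Antitone H)
    (hG : Supermodular G) (hu : u.support.Finite) (hv : v.support.Finite) (c₁ c₂ : ℤ) :
    ∑' (x : ℤ) (y : ℤ),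
        ((G (u x) (v y) * H (Real.nnabs ((x + c₁ / 2 : ℝ) - (y + c₂ / 2))) : NNReal) : ENNReal) ≤
      ∑' (x : ℤ) (y : ℤ), ((G (rearrange c₁ u x) (rearrange c₂ v y) *
        H (Real.nnabs ((x + c₁ / 2 : ℝ) - (y + c₂ / 2))) : NNReal) : ENNReal) := by
  have hdiff (x y : ℤ) : (x + c₁ / 2 : ℝ) - (y + c₂ / 2) =
      ((x - y : ℤ) : ℝ) + ((c₁ - c₂ : ℤ) : ℝ) / 2 := by
    push_cast
    ring
  simp only [hdiff]
  exact rieszSum_le_rearrange (.of_antitone_nnabs hH (c₁ - c₂)) hG hu hv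

end RieszSum

/-- One-dimensional discrete Riesz inequality on ℤ, on ℤ+1/2, and in the mixed case. -/
theorem stmt10 (H : NNReal → NNReal) (hH : Antitone H)
    (G : NNReal → NNReal → NNReal) (hG : Supermodular G) :
    (∀ u v : ℤ → NNReal, (Function.support u).Finite → (Function.support v).Finite →
      ∑' (x : ℤ) (y : ℤ), ((G (u x) (v y) * H ((x - y).natAbs) : NNReal) : ENNReal) ≤
      ∑' (x : ℤ) (y : ℤ), ((G (RZ1 u x) (RZ1 v y) * H ((x - y).natAbs) : NNReal) : ENNReal)) ∧
    (∀ u v : ℤ → NNReal, (Function.support u).Finite → (Function.support v).Finite →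
      ∑' (x : ℤ) (y : ℤ), ((G (u x) (v y) * H ((x - y).natAbs) : NNReal) : ENNReal) ≤
      ∑' (x : ℤ) (y : ℤ), ((G (RHalf u x) (RHalf v y) * H ((x - y).natAbs) : NNReal) : ENNReal)) ∧
    (∀ u v : ℤ → NNReal, (Function.support u).Finite → (Function.support v).Finite →
      ∑' (x : ℤ) (y : ℤ),
          ((G (u x) (v y) * H (Real.nnabs ((x : ℝ) - ((y : ℝ) + 1 / 2))) : NNReal) : ENNReal) ≤
      ∑' (x : ℤ) (y : ℤ),
          ((G (RZ1 u x) (RHalf v y) * H (Real.nnabs ((x : ℝ) - ((y : ℝ) + 1 / 2))) : NNReal) : ENNReal)) := by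
  refine ⟨fun u v hu hv => ?_, fun u v hu hv => ?_, fun u v hu hv => ?_⟩
  · simpa [rearrange_zero, Real.cast_natAbs_eq_nnabs_cast] using
      tsum_tsum_le_rearrange hH hG hu hv 0 0
  · simpa [rearrange_one, Real.cast_natAbs_eq_nnabs_cast] using
      tsum_tsum_le_rearrange hH hG hu hv 1 1
  · simpa [rearrange_zero, rearrange_one] using tsum_tsum_le_rearrange hH hG hu hv 0 1

end
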